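/- Let 1 ≤ p < q < ∞, d ≥ 1, 0 < ε < 1, 0 < δ < 1. With f(x) = |x|^{-d/q}·χ_{(0,1)}(|x|), g = χ_{(0,ε)}(|·|)f, h = χ_{(ε,1)}(|·|)f, and l = (1+δ)g + (1−δ)h, the quantity [(‖f‖+‖l‖)/‖f−l‖]·‖f/‖f‖ − l/‖l‖‖ (all norms the small Morrey norm) is at least (4+2δ)/(1+δ) · (1 − ε^{d−dp/q})^{1/p}. -/

import Mathlib

open MeasureTheory Metric ENNReal

/-- The small Morrey norm: sup over centers `a` and radii `R ∈ (0,1)` of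
`|B(a,R)|^(1/q-1/p) (∫_{B(a,R)} |f|^p)^(1/p)`, valued in `ℝ≥0∞`. -/
noncomputable def smallMorreyNorm (d : ℕ) (p q : ℝ)
    (f : EuclideanSpace ℝ (Fin d) → ℝ) : ℝ≥0∞ :=
  ⨆ (a : EuclideanSpace ℝ (Fin d)) (R : ℝ) (_ : 0 < R) (_ : R < 1),
    volume (ball a R) ^ (1 / q - 1 / p) *
      (∫⁻ y in ball a R, ENNReal.ofReal (|f y| ^ p)) ^ (1 / p)

/-- The (classical) Morrey norm: sup over all centers `a` and radii `R > 0`. -/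
noncomputable def morreyNorm (d : ℕ) (p q : ℝ)
    (f : EuclideanSpace ℝ (Fin d) → ℝ) : ℝ≥0∞ :=
  ⨆ (a : EuclideanSpace ℝ (Fin d)) (R : ℝ) (_ : 0 < R),
    volume (ball a R) ^ (1 / q - 1 / p) *
      (∫⁻ y in ball a R, ENNReal.ofReal (|f y| ^ p)) ^ (1 / p)

/-!
Over centred balls the functional defining the norm is constant on the critical power
`w(x) = |x|^{-d/q}`, because `|B(0,R)|^{1/q-1/p} ∼ R^{d/q-d/p}` cancels
`(∫_{B(0,R)} |x|^{-dp/q})^{1/p} ∼ R^{d/p-d/q}`; as `w` is radially decreasing, off-centre balls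
give no more. Hence truncating `w` to a ball about the origin does not change its norm `M`, while
truncating to the annulus `ε < |x| < 1` multiplies the integral over `B(0,1)` by `1 - ε^{d-dp/q}`.

Since `g` and `h` have disjoint supports and `‖g‖ = ‖f‖ = M`, one gets `‖l‖ = (1+δ)M`,
`‖f - l‖ = δ‖g - h‖ = δM`, and in `f/‖f‖ - l/‖l‖` the `g` parts cancel, leaving `2δh/((1+δ)M)`.
The quotient is therefore exactly `(4+2δ)/(1+δ) · ‖h‖/M`.
-/

section PowerIntegrals

open Set Module

theorem setLIntegral_le_setLIntegral_of_measure_le {α : Type*} [MeasurableSpace α] {μ : Measure α}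
    {A B : Set α} {f : α → ℝ≥0∞} {c : ℝ≥0∞} (hA : MeasurableSet A) (hB : MeasurableSet B)
    (hAB : μ A ≤ μ B) (hfin : μ (A ∩ B) ≠ ∞) (hfc : ∀ᵐ x ∂μ, x ∈ A \ B → f x ≤ c)
    (hcf : ∀ᵐ x ∂μ, x ∈ B \ A → c ≤ f x) :
    ∫⁻ x in A, f x ∂μ ≤ ∫⁻ x in B, f x ∂μ := by
  have hdiff : μ (A \ B) ≤ μ (B \ A) := by
    rw [← measure_inter_add_sdiff A hB, ← measure_inter_add_sdiff B hA, inter_comm B A] at hAB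
    exact ENNReal.le_of_add_le_add_left hfin hAB
  have hout : ∫⁻ x in A \ B, f x ∂μ ≤ ∫⁻ x in B \ A, f x ∂μ := calc
    ∫⁻ x in A \ B, f x ∂μ ≤ ∫⁻ _ in A \ B, c ∂μ := setLIntegral_mono_ae' (hA.diff hB) hfc
    _ = c * μ (A \ B) := setLIntegral_const _ _
    _ ≤ c * μ (B \ A) := by gcongr
    _ = ∫⁻ _ in B \ A, c ∂μ := (setLIntegral_const _ _).symm
    _ ≤ ∫⁻ x in B \ A, f x ∂μ := setLIntegral_mono_ae' (hB.diff hA) hcf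
  rw [← lintegral_inter_add_sdiff f A hB, ← lintegral_inter_add_sdiff f B hA, inter_comm B A]
  gcongr

variable {E : Type*} [NormedAddCommGroup E] [MeasurableSpace E] [BorelSpace E] [NormedSpace ℝ E]
  [FiniteDimensional ℝ E] [Nontrivial E] (μ : Measure E) [μ.IsAddHaarMeasure] {a b R r : ℝ}

theorem setLIntegral_ball_le_setLIntegral_ball_zero {φ : ℝ → ℝ≥0∞} (hφ : AntitoneOn φ (Ioi 0))
    (c : E) : ∫⁻ x in ball c R, φ ‖x‖ ∂μ ≤ ∫⁻ x in ball 0 R, φ ‖x‖ ∂μ := by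
  rcases le_or_gt R 0 with hR | hR
  · simp [ball_eq_empty.2 hR]
  refine setLIntegral_le_setLIntegral_of_measure_le (c := φ R) measurableSet_ball measurableSet_ball
    (μ.addHaar_ball_center c R).le (measure_ne_top_of_subset inter_subset_left
      measure_ball_lt_top.ne) (.of_forall fun x hx => ?_) ?_
  · have hRx : R ≤ ‖x‖ := by simpa using hx.2
    exact hφ hR (hR.trans_le hRx) hRx
  · filter_upwards [μ.ae_ne 0] with x hx0 hx
    exact hφ (norm_pos_iff.2 hx0) hR (mem_ball_zero_iff.1 hx.1).le

theorem integrableOn_norm_rpow_ball (hr : -(finrank ℝ E : ℝ) < r) :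
    IntegrableOn (fun x : E => ‖x‖ ^ r) (ball 0 R) μ :=
  integrableOn_ball_of_norm_le_rpow (C := 1) (α := -r) finrank_pos (by linarith)
    (.of_forall fun x => by simp [abs_of_nonneg (Real.rpow_nonneg (norm_nonneg x) r)])
    (measurable_norm.pow_const r).aestronglyMeasurable

theorem setIntegral_norm_rpow_annulus (hr : -(finrank ℝ E : ℝ) < r) (ha : 0 ≤ a) (hab : a ≤ b) :
    ∫ x in {x : E | a < ‖x‖ ∧ ‖x‖ < b}, ‖x‖ ^ r ∂μ =
      finrank ℝ E * μ.real (ball 0 1) *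
        ((b ^ (finrank ℝ E + r) - a ^ (finrank ℝ E + r)) / (finrank ℝ E + r)) := by
  have hmeas : MeasurableSet {x : E | a < ‖x‖ ∧ ‖x‖ < b} := measurable_norm measurableSet_Ioo
  have hradial : ∫ y in Ioi (0 : ℝ), y ^ (finrank ℝ E - 1) • (Ioo a b).indicator (· ^ r) y =
      ∫ y in a..b, y ^ (finrank ℝ E + r - 1) := by
    have hsub : Ioi 0 ∩ Ioo a b = Ioo a b :=
      inter_eq_right.2 (Ioo_subset_Ioi_self.trans (Ioi_subset_Ioi ha))
    rw [intervalIntegral.integral_of_le hab, integral_Ioc_eq_integral_Ioo]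
    nth_rw 2 [← hsub]
    rw [← setIntegral_indicator measurableSet_Ioo]
    refine setIntegral_congr_fun measurableSet_Ioi fun y (hy : 0 < y) => ?_
    have hpow : y ^ (finrank ℝ E - 1) * y ^ r = y ^ (finrank ℝ E + r - 1) := by
      rw [← Real.rpow_natCast, ← Real.rpow_add hy, Nat.cast_pred finrank_pos]
      ring_nf
    by_cases hyab : y ∈ Ioo a b <;> simp [hyab, hpow]
  calc ∫ x in {x : E | a < ‖x‖ ∧ ‖x‖ < b}, ‖x‖ ^ r ∂μ
      = ∫ x : E, (Ioo a b).indicator (· ^ r) ‖x‖ ∂μ := by rw [← integral_indicator hmeas]; rfl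
    _ = finrank ℝ E * μ.real (ball 0 1) * ∫ y in a..b, y ^ (finrank ℝ E + r - 1) := by
      rw [integral_fun_norm_addHaar, hradial, nsmul_eq_mul, smul_eq_mul, mul_assoc]
    _ = _ := by rw [integral_rpow (.inl (by linarith)), sub_add_cancel]

theorem setLIntegral_norm_rpow_annulus (hr : -(finrank ℝ E : ℝ) < r) (ha : 0 ≤ a) (hab : a ≤ b) :
    ∫⁻ x in {x : E | a < ‖x‖ ∧ ‖x‖ < b}, ENNReal.ofReal (‖x‖ ^ r) ∂μ =
      ENNReal.ofReal (finrank ℝ E * μ.real (ball 0 1) *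
        ((b ^ (finrank ℝ E + r) - a ^ (finrank ℝ E + r)) / (finrank ℝ E + r))) := by
  have hint : IntegrableOn (fun x : E => ‖x‖ ^ r) {x | a < ‖x‖ ∧ ‖x‖ < b} μ :=
    (integrableOn_norm_rpow_ball μ hr).mono_set fun x hx => mem_ball_zero_iff.2 hx.2
  rw [← setIntegral_norm_rpow_annulus μ hr ha hab, ofReal_integral_eq_lintegral_ofReal hint
    (.of_forall fun x => Real.rpow_nonneg (norm_nonneg x) r)]

end PowerIntegrals

section Truncation

/-- The truncation `χ_{(a,b)}(|·|) u` of `u` to the open annulus of radii `a` and `b`, written with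
`if` so that it unfolds to the functions of `dunklWilliams_pair_lower`. -/
noncomputable def annulusCut {E : Type*} [Norm E] (a b : ℝ) (u : E → ℝ) : E → ℝ :=
  fun x => if a < ‖x‖ ∧ ‖x‖ < b then u x else 0

theorem abs_annulusCut_le {E : Type*} [Norm E] (a b : ℝ) (u : E → ℝ) (x : E) :
    |annulusCut a b u x| ≤ |u x| := by
  unfold annulusCut
  split_ifs <;> simp

theorem annulusCut_annulusCut {E : Type*} [Norm E] (a b a' b' : ℝ) (u : E → ℝ) :
    annulusCut a b (annulusCut a' b' u) = annulusCut (max a a') (min b b') u := by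
  ext x
  simp only [annulusCut, max_lt_iff, lt_min_iff]
  grind

theorem annulusCut_eq_zero_or {E : Type*} [Norm E] (a b c : ℝ) (u : E → ℝ) (x : E) :
    annulusCut a b u x = 0 ∨ annulusCut b c u x = 0 := by
  unfold annulusCut
  grind

theorem annulusCut_ae_eq_add {E : Type*} [NormedAddCommGroup E] [NormedSpace ℝ E]
    [FiniteDimensional ℝ E] [MeasurableSpace E] [BorelSpace E] (μ : Measure E)
    [μ.IsAddHaarMeasure] {a b c : ℝ} (hab : a < b) (hb : b ≠ 0) (hbc : b ≤ c) (u : E → ℝ) :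
    ∀ᵐ x ∂μ, annulusCut a c u x = annulusCut a b u x + annulusCut b c u x := by
  filter_upwards [measure_eq_zero_iff_ae_notMem.1 (μ.addHaar_sphere_of_ne_zero 0 hb)] with x hx
  have hxb : ‖x‖ ≠ b := by simpa using hx
  unfold annulusCut
  grind

end Truncation

section MorreyNorm

variable {d : ℕ} {p q : ℝ} {u v : EuclideanSpace ℝ (Fin d) → ℝ}

theorem le_smallMorreyNorm (a : EuclideanSpace ℝ (Fin d)) {R : ℝ} (hR0 : 0 < R) (hR1 : R < 1) :
    volume (ball a R) ^ (1 / q - 1 / p) *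
      (∫⁻ y in ball a R, ENNReal.ofReal (|u y| ^ p)) ^ (1 / p) ≤ smallMorreyNorm d p q u :=
  le_iSup₂_of_le a R (le_iSup₂_of_le hR0 hR1 le_rfl)

theorem smallMorreyNorm_mono_ae (hp : 0 ≤ p) (huv : ∀ᵐ x, |u x| ≤ |v x|) :
    smallMorreyNorm d p q u ≤ smallMorreyNorm d p q v := by
  refine iSup₂_mono fun a R => iSup₂_mono fun _ _ => ?_
  gcongr _ * ?_ ^ _
  refine lintegral_mono_ae ?_
  filter_upwards [ae_restrict_of_ae huv] with x hx
  gcongr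

theorem smallMorreyNorm_congr_abs_ae (hp : 0 ≤ p) (huv : ∀ᵐ x, |u x| = |v x|) :
    smallMorreyNorm d p q u = smallMorreyNorm d p q v :=
  le_antisymm (smallMorreyNorm_mono_ae hp (huv.mono fun _ h => h.le))
    (smallMorreyNorm_mono_ae hp (huv.mono fun _ h => h.ge))

theorem smallMorreyNorm_const_mul (hp : 0 < p) (c : ℝ) (u : EuclideanSpace ℝ (Fin d) → ℝ) :
    smallMorreyNorm d p q (fun x => c * u x) =
      ENNReal.ofReal |c| * smallMorreyNorm d p q u := by
  simp only [smallMorreyNorm, ENNReal.mul_iSup]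
  refine iSup_congr fun a => iSup_congr fun R => iSup_congr fun _ => iSup_congr fun _ => ?_
  have hpow (y) : ENNReal.ofReal (|c * u y| ^ p) =
      ENNReal.ofReal |c| ^ p * ENNReal.ofReal (|u y| ^ p) := by
    rw [abs_mul, Real.mul_rpow (abs_nonneg _) (abs_nonneg _), ENNReal.ofReal_mul (by positivity),
      ENNReal.ofReal_rpow_of_nonneg (abs_nonneg _) hp.le]
  simp only [hpow]
  rw [lintegral_const_mul' _ _ (by finiteness), ENNReal.mul_rpow_of_nonneg _ _ (by positivity),
    ← ENNReal.rpow_mul, mul_one_div_cancel hp.ne', ENNReal.rpow_one, mul_left_comm]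

end MorreyNorm

section CriticalPower

variable {d : ℕ} {p q : ℝ}

/-- The critical power `|x|^{-d/q}`, of which the functions of `dunklWilliams_pair_lower` are
truncations. -/
noncomputable def criticalPower (d : ℕ) (q : ℝ) : EuclideanSpace ℝ (Fin d) → ℝ :=
  fun x => ‖x‖ ^ (-(d : ℝ) / q)

/-- The common value `|B(0,1)|^{1/q} (q/(q-p))^{1/p}` of the small Morrey norms of
`|x|^{-d/q} χ_{(0,b)}(|x|)`, `0 < b ≤ 1`. -/
noncomputable def criticalPowerNorm (d : ℕ) (p q : ℝ) : ℝ :=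
  volume.real (ball (0 : EuclideanSpace ℝ (Fin d)) 1) ^ (1 / q) * (q / (q - p)) ^ (1 / p)

theorem measureReal_unitBall_pos (d : ℕ) :
    0 < volume.real (ball (0 : EuclideanSpace ℝ (Fin d)) 1) :=
  ENNReal.toReal_pos (measure_ball_pos _ _ one_pos).ne' measure_ball_lt_top.ne

theorem criticalPowerNorm_pos (hp : 0 < p) (hpq : p < q) : 0 < criticalPowerNorm d p q :=
  mul_pos (Real.rpow_pos_of_pos (measureReal_unitBall_pos d) _)
    (Real.rpow_pos_of_pos (div_pos (hp.trans hpq) (sub_pos.2 hpq)) _)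

theorem abs_criticalPower_rpow (d : ℕ) (p q : ℝ) (x : EuclideanSpace ℝ (Fin d)) :
    |criticalPower d q x| ^ p = ‖x‖ ^ (-(d * p / q)) := by
  rw [criticalPower, abs_of_nonneg (by positivity), ← Real.rpow_mul (norm_nonneg x)]
  ring_nf

theorem sub_mul_div_pos {n : ℝ} (hn : 0 < n) (hq : 0 < q) (hpq : p < q) :
    0 < n - n * p / q := by
  rw [sub_pos, div_lt_iff₀ hq]
  gcongr

theorem rpow_mul_annulus_rpow_eq {n V a R : ℝ} (hn : 0 < n) (hV : 0 < V) (hp : 0 < p)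
    (hpq : p < q) (ha : 0 ≤ a) (haR : a < R) :
    (R ^ n * V) ^ (1 / q - 1 / p) *
      (n * V * ((R ^ (n - n * p / q) - a ^ (n - n * p / q)) / (n - n * p / q))) ^ (1 / p) =
    V ^ (1 / q) * (q / (q - p)) ^ (1 / p) * (1 - (a / R) ^ (n - n * p / q)) ^ (1 / p) := by
  have hR : 0 < R := ha.trans_lt haR
  have hq : 0 < q := hp.trans hpq
  have hqp : 0 < q - p := sub_pos.2 hpq
  have hs : 0 < n - n * p / q := sub_mul_div_pos hn hq hpq
  have hexp : n * (1 / q - 1 / p) + (n - n * p / q) * (1 / p) = 0 := by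
    field_simp
    ring
  have hcoef : n / (n - n * p / q) = q / (q - p) := by field_simp
  set s := n - n * p / q
  have hratio : 0 ≤ 1 - (a / R) ^ s :=
    sub_nonneg.2 (Real.rpow_le_one (by positivity) ((div_le_one hR).2 haR.le) hs.le)
  have hint : n * V * ((R ^ s - a ^ s) / s) = R ^ s * V * (q / (q - p)) * (1 - (a / R) ^ s) := by
    rw [Real.div_rpow ha hR.le, ← hcoef]
    field_simp
  have hRcancel : R ^ (n * (1 / q - 1 / p)) * R ^ (s * (1 / p)) = 1 := by
    rw [← Real.rpow_add hR, hexp, Real.rpow_zero]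
  have hVsplit : V ^ (1 / q) = V ^ (1 / q - 1 / p) * V ^ (1 / p) := by
    rw [← Real.rpow_add hV, sub_add_cancel]
  rw [hint, Real.mul_rpow (by positivity) hV.le, Real.mul_rpow (by positivity) hratio,
    Real.mul_rpow (by positivity) (by positivity), Real.mul_rpow (by positivity) hV.le,
    ← Real.rpow_mul hR.le, ← Real.rpow_mul hR.le, hVsplit]
  linear_combination V ^ (1 / q - 1 / p) * V ^ (1 / p) * (q / (q - p)) ^ (1 / p) *
    (1 - (a / R) ^ s) ^ (1 / p) * hRcancel

theorem volume_ball_rpow_mul_lintegral_annulus [NeZero d] (hp : 0 < p) (hpq : p < q) {a R : ℝ}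
    (ha : 0 ≤ a) (haR : a < R) :
    volume (ball (0 : EuclideanSpace ℝ (Fin d)) R) ^ (1 / q - 1 / p) *
      (∫⁻ x in {x : EuclideanSpace ℝ (Fin d) | a < ‖x‖ ∧ ‖x‖ < R},
        ENNReal.ofReal (|criticalPower d q x| ^ p)) ^ (1 / p) =
    ENNReal.ofReal
      (criticalPowerNorm d p q * (1 - (a / R) ^ ((d : ℝ) - d * p / q)) ^ (1 / p)) := by
  have hR : 0 < R := ha.trans_lt haR
  have hd : 0 < (d : ℝ) := Nat.cast_pos.2 (NeZero.pos d)
  have hs : 0 < (d : ℝ) - d * p / q := sub_mul_div_pos hd (hp.trans hpq) hpq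
  have hV := measureReal_unitBall_pos d
  have hmono : a ^ ((d : ℝ) - d * p / q) ≤ R ^ ((d : ℝ) - d * p / q) :=
    Real.rpow_le_rpow ha haR.le hs.le
  have hint : 0 ≤ d * volume.real (ball (0 : EuclideanSpace ℝ (Fin d)) 1) *
      ((R ^ ((d : ℝ) - d * p / q) - a ^ ((d : ℝ) - d * p / q)) / ((d : ℝ) - d * p / q)) :=
    mul_nonneg (by positivity) (div_nonneg (sub_nonneg.2 hmono) hs.le)
  simp only [abs_criticalPower_rpow]
  rw [setLIntegral_norm_rpow_annulus volume (by simpa using hs) ha haR.le,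
    Measure.addHaar_ball_of_pos _ _ hR, ← ofReal_measureReal measure_ball_lt_top.ne,
    ← ENNReal.ofReal_mul (by positivity), finrank_euclideanSpace_fin, ← sub_eq_add_neg,
    ENNReal.ofReal_rpow_of_pos (by positivity), ENNReal.ofReal_rpow_of_nonneg hint (by positivity),
    ← ENNReal.ofReal_mul (by positivity), ← Real.rpow_natCast,
    rpow_mul_annulus_rpow_eq hd hV hp hpq ha haR, criticalPowerNorm]

theorem setLIntegral_ball_criticalPower_le [NeZero d] (hp : 0 ≤ p) (hq : 0 ≤ q)
    (c : EuclideanSpace ℝ (Fin d)) (R : ℝ) :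
    ∫⁻ x in ball c R, ENNReal.ofReal (|criticalPower d q x| ^ p) ≤
      ∫⁻ x in {x : EuclideanSpace ℝ (Fin d) | 0 < ‖x‖ ∧ ‖x‖ < R},
        ENNReal.ofReal (|criticalPower d q x| ^ p) := by
  have hanti : AntitoneOn (fun y : ℝ => ENNReal.ofReal (y ^ (-(d * p / q)))) (Set.Ioi 0) :=
    ENNReal.ofReal_mono.comp_antitoneOn (Real.antitoneOn_rpow_Ioi_of_exponent_nonpos
      (neg_nonpos.2 (by positivity)))
  have hpunctured : ball (0 : EuclideanSpace ℝ (Fin d)) R =ᵐ[volume]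
      {x | 0 < ‖x‖ ∧ ‖x‖ < R} := by
    refine Filter.eventuallyEq_set.2 ?_
    filter_upwards [volume.ae_ne 0] with x hx
    simp [hx]
  simp only [abs_criticalPower_rpow]
  calc _ ≤ _ := setLIntegral_ball_le_setLIntegral_ball_zero volume hanti c
    _ = _ := setLIntegral_congr hpunctured

theorem smallMorreyNorm_criticalPower_le [NeZero d] (hp : 0 < p) (hpq : p < q) :
    smallMorreyNorm d p q (criticalPower d q) ≤ ENNReal.ofReal (criticalPowerNorm d p q) := by
  refine iSup₂_le fun c R => iSup₂_le fun hR _ => ?_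
  have hs : 0 < (d : ℝ) - d * p / q :=
    sub_mul_div_pos (Nat.cast_pos.2 (NeZero.pos d)) (hp.trans hpq) hpq
  calc volume (ball c R) ^ (1 / q - 1 / p) *
        (∫⁻ x in ball c R, ENNReal.ofReal (|criticalPower d q x| ^ p)) ^ (1 / p)
      ≤ volume (ball (0 : EuclideanSpace ℝ (Fin d)) R) ^ (1 / q - 1 / p) *
        (∫⁻ x in {x : EuclideanSpace ℝ (Fin d) | 0 < ‖x‖ ∧ ‖x‖ < R},
          ENNReal.ofReal (|criticalPower d q x| ^ p)) ^ (1 / p) := by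
        rw [Measure.addHaar_ball_center]
        gcongr _ * ?_ ^ _
        exact setLIntegral_ball_criticalPower_le hp.le (hp.trans hpq).le c R
    _ = ENNReal.ofReal (criticalPowerNorm d p q) := by
        rw [volume_ball_rpow_mul_lintegral_annulus hp hpq le_rfl hR]
        simp [Real.zero_rpow hs.ne']

theorem setLIntegral_ball_zero_annulusCut {E : Type*} [NormedAddCommGroup E] [MeasurableSpace E]
    [BorelSpace E] {μ : Measure E} (hp : p ≠ 0) {a b R : ℝ} (hRb : R ≤ b) (u : E → ℝ) :
    ∫⁻ x in ball 0 R, ENNReal.ofReal (|annulusCut a b u x| ^ p) ∂μ =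
      ∫⁻ x in {x | a < ‖x‖ ∧ ‖x‖ < R}, ENNReal.ofReal (|u x| ^ p) ∂μ := by
  have hball : {x : E | a < ‖x‖ ∧ ‖x‖ < R} = {x | a < ‖x‖} ∩ ball 0 R := by ext; simp
  have hmeas : MeasurableSet {x : E | a < ‖x‖} := measurable_norm measurableSet_Ioi
  rw [hball, ← setLIntegral_indicator hmeas]
  refine setLIntegral_congr_fun measurableSet_ball fun x hx => ?_
  have hxb : ‖x‖ < b := (mem_ball_zero_iff.1 hx).trans_le hRb
  by_cases hax : a < ‖x‖ <;> simp [annulusCut, hax, hxb, hp]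

theorem le_smallMorreyNorm_annulusCut [NeZero d] (hp : 0 < p) (hpq : p < q) {a b : ℝ}
    (ha : 0 ≤ a) (hab : a < b) (hb : b ≤ 1) :
    ENNReal.ofReal
        (criticalPowerNorm d p q * (1 - (a / b) ^ ((d : ℝ) - d * p / q)) ^ (1 / p)) ≤
      smallMorreyNorm d p q (annulusCut a b (criticalPower d q)) := by
  have hs : 0 < (d : ℝ) - d * p / q :=
    sub_mul_div_pos (Nat.cast_pos.2 (NeZero.pos d)) (hp.trans hpq) hpq
  have hcont : ContinuousAt (fun R : ℝ => ENNReal.ofReal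
      (criticalPowerNorm d p q * (1 - (a / R) ^ ((d : ℝ) - d * p / q)) ^ (1 / p))) b := by
    have hexp : 0 ≤ 1 / p := by positivity
    refine ENNReal.continuous_ofReal.continuousAt.comp ?_
    fun_prop (disch := grind)
  -- The radius `b = 1` is not admissible in the small Morrey norm, so `b` is reached from below.
  refine le_of_tendsto (hcont.tendsto.mono_left (nhdsWithin_le_nhds (s := Set.Iio b))) ?_
  filter_upwards [Ioo_mem_nhdsLT hab] with R ⟨haR, hRb⟩
  refine le_trans (le_of_eq ?_)
    (le_smallMorreyNorm 0 (ha.trans_lt haR) (hRb.trans_le hb))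
  rw [← volume_ball_rpow_mul_lintegral_annulus hp hpq ha haR,
    setLIntegral_ball_zero_annulusCut hp.ne' hRb.le]

theorem smallMorreyNorm_annulusCut_zero [NeZero d] (hp : 0 < p) (hpq : p < q) {b : ℝ}
    (hb0 : 0 < b) (hb1 : b ≤ 1) :
    smallMorreyNorm d p q (annulusCut 0 b (criticalPower d q)) =
      ENNReal.ofReal (criticalPowerNorm d p q) := by
  have hs : 0 < (d : ℝ) - d * p / q :=
    sub_mul_div_pos (Nat.cast_pos.2 (NeZero.pos d)) (hp.trans hpq) hpq
  refine le_antisymm ?_ ?_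
  · exact (smallMorreyNorm_mono_ae hp.le (.of_forall (abs_annulusCut_le 0 b _))).trans
      (smallMorreyNorm_criticalPower_le hp hpq)
  · have hlower := le_smallMorreyNorm_annulusCut (d := d) hp hpq le_rfl hb0 hb1
    simpa [Real.zero_rpow hs.ne'] using hlower

end CriticalPower

section DunklWilliams

variable {d : ℕ} {p q δ : ℝ} {f g h : EuclideanSpace ℝ (Fin d) → ℝ}

/-- The Dunkl–Williams quotient `(‖f‖ + ‖l‖) / ‖f - l‖ * ‖f / ‖f‖ - l / ‖l‖‖` of the small Morrey
norm, with the norms used as scalars taken in `ℝ`. -/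
noncomputable def dunklWilliamsQuotient (d : ℕ) (p q : ℝ)
    (f l : EuclideanSpace ℝ (Fin d) → ℝ) : ℝ≥0∞ :=
  ((smallMorreyNorm d p q f + smallMorreyNorm d p q l) /
      smallMorreyNorm d p q (fun x => f x - l x)) *
    smallMorreyNorm d p q
      (fun x => f x / (smallMorreyNorm d p q f).toReal -
        l x / (smallMorreyNorm d p q l).toReal)

/-- The perturbation `(1 + δ) g + (1 - δ) h` of `g + h`, which is the function `l` of
`dunklWilliams_pair_lower`. -/
def tilt (δ : ℝ) (g h : EuclideanSpace ℝ (Fin d) → ℝ) : EuclideanSpace ℝ (Fin d) → ℝ :=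
  fun x => (1 + δ) * g x + (1 - δ) * h x

theorem smallMorreyNorm_tilt (hp : 0 < p) (hδ : 0 ≤ δ) (hgh : ∀ x, g x = 0 ∨ h x = 0)
    (hf : ∀ᵐ x, f x = g x + h x) (hfg : smallMorreyNorm d p q f = smallMorreyNorm d p q g) :
    smallMorreyNorm d p q (tilt δ g h) = ENNReal.ofReal (1 + δ) * smallMorreyNorm d p q f := by
  have hδ1 : |1 + δ| = 1 + δ := abs_of_nonneg (by linarith)
  have hδ2 : |1 - δ| ≤ 1 + δ := abs_le.2 ⟨by linarith, by linarith⟩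
  refine le_antisymm ?_ ?_
  · rw [← hδ1, ← smallMorreyNorm_const_mul hp]
    refine smallMorreyNorm_mono_ae hp.le ?_
    filter_upwards [hf] with x hx
    rcases hgh x with h0 | h0
    · simp only [tilt, hx, h0, abs_mul, mul_zero, zero_add, hδ1]
      gcongr
    · simp [tilt, hx, h0]
  · rw [hfg, ← hδ1, ← smallMorreyNorm_const_mul hp]
    refine smallMorreyNorm_mono_ae hp.le (.of_forall fun x => ?_)
    rcases hgh x with h0 | h0
    · simpa [tilt, h0] using by positivity
    · simp [tilt, h0]

theorem smallMorreyNorm_sub_tilt (hp : 0 < p) (hgh : ∀ x, g x = 0 ∨ h x = 0)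
    (hf : ∀ᵐ x, f x = g x + h x) :
    smallMorreyNorm d p q (fun x => f x - tilt δ g h x) =
      ENNReal.ofReal |δ| * smallMorreyNorm d p q f := by
  rw [← smallMorreyNorm_const_mul hp]
  refine smallMorreyNorm_congr_abs_ae hp.le ?_
  filter_upwards [hf] with x hx
  rw [tilt, hx, abs_eq_abs]
  rcases hgh x with h0 | h0
  · left
    rw [h0]
    ring
  · right
    rw [h0]
    ring

theorem smallMorreyNorm_div_sub_tilt_div (hp : 0 < p) (hδ : 1 + δ ≠ 0) {M : ℝ} (hM : M ≠ 0)
    (hf : ∀ᵐ x, f x = g x + h x) :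
    smallMorreyNorm d p q (fun x => f x / M - tilt δ g h x / ((1 + δ) * M)) =
      ENNReal.ofReal |2 * δ / ((1 + δ) * M)| * smallMorreyNorm d p q h := by
  rw [← smallMorreyNorm_const_mul hp]
  refine smallMorreyNorm_congr_abs_ae hp.le ?_
  filter_upwards [hf] with x hx
  rw [tilt, hx]
  congr 1
  field_simp
  ring

theorem dunklWilliamsQuotient_tilt (hp : 0 < p) (hδ : 0 < δ) (hgh : ∀ x, g x = 0 ∨ h x = 0)
    (hf : ∀ᵐ x, f x = g x + h x) {M : ℝ} (hM : 0 < M)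
    (hfM : smallMorreyNorm d p q f = ENNReal.ofReal M)
    (hgM : smallMorreyNorm d p q g = ENNReal.ofReal M) :
    dunklWilliamsQuotient d p q f (tilt δ g h) =
      ENNReal.ofReal ((4 + 2 * δ) / (1 + δ) / M) * smallMorreyNorm d p q h := by
  have hl : smallMorreyNorm d p q (tilt δ g h) = ENNReal.ofReal ((1 + δ) * M) := by
    rw [smallMorreyNorm_tilt hp hδ.le hgh hf (hfM.trans hgM.symm), hfM,
      ENNReal.ofReal_mul (by positivity)]
  have hsub : smallMorreyNorm d p q (fun x => f x - tilt δ g h x) = ENNReal.ofReal (δ * M) := by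
    rw [smallMorreyNorm_sub_tilt hp hgh hf, hfM, abs_of_pos hδ, ENNReal.ofReal_mul hδ.le]
  rw [dunklWilliamsQuotient, hfM, hl, hsub, ENNReal.toReal_ofReal hM.le,
    ENNReal.toReal_ofReal (by positivity),
    smallMorreyNorm_div_sub_tilt_div hp (by positivity) hM.ne' hf, abs_of_pos (by positivity),
    ← ENNReal.ofReal_add hM.le (by positivity), ← ENNReal.ofReal_div_of_pos (by positivity),
    ← mul_assoc, ← ENNReal.ofReal_mul (by positivity)]
  congr 2
  field_simp
  ring

theorem dunklWilliams_pair_lower_general {ε : ℝ} (hp : 0 < p) (hpq : p < q) (hd : 1 ≤ d)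
    (hε0 : 0 < ε) (hε1 : ε < 1) (hδ : 0 < δ) :
    letI f := annulusCut 0 1 (criticalPower d q)
    letI g := annulusCut 0 ε f
    letI h := annulusCut ε 1 f
    ENNReal.ofReal ((4 + 2 * δ) / (1 + δ) * (1 - ε ^ ((d : ℝ) - d * p / q)) ^ (1 / p)) ≤
      dunklWilliamsQuotient d p q f (tilt δ g h) := by
  have : NeZero d := ⟨by omega⟩
  have hM : 0 < criticalPowerNorm d p q := criticalPowerNorm_pos hp hpq
  rw [annulusCut_annulusCut, annulusCut_annulusCut, max_self, min_eq_left hε1.le,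
    max_eq_left hε0.le, min_self,
    dunklWilliamsQuotient_tilt hp hδ (annulusCut_eq_zero_or 0 ε 1 _)
      (annulusCut_ae_eq_add volume hε0 hε0.ne' hε1.le _) hM
      (smallMorreyNorm_annulusCut_zero hp hpq one_pos le_rfl)
      (smallMorreyNorm_annulusCut_zero hp hpq hε0 hε1.le)]
  have hh := le_smallMorreyNorm_annulusCut (d := d) hp hpq hε0.le hε1 le_rfl
  rw [div_one] at hh
  grw [← hh]
  rw [← ENNReal.ofReal_mul (by positivity), ← mul_assoc, div_mul_cancel₀ _ hM.ne']

end DunklWilliams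

/-- the Dunkl–Williams quotient of the pair `(f, l)` is at least
`(4+2δ)/(1+δ) · (1 - ε^{d-dp/q})^{1/p}`. -/
theorem dunklWilliams_pair_lower (d : ℕ) (p q : ℝ) (hp : 1 ≤ p) (hpq : p < q)
    (hd : 1 ≤ d) (ε δ : ℝ) (hε0 : 0 < ε) (hε1 : ε < 1) (hδ0 : 0 < δ) (hδ1 : δ < 1) :
    letI f : EuclideanSpace ℝ (Fin d) → ℝ :=
      fun x => if 0 < ‖x‖ ∧ ‖x‖ < 1 then ‖x‖ ^ (-(d : ℝ) / q) else 0
    letI g : EuclideanSpace ℝ (Fin d) → ℝ :=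
      fun x => if 0 < ‖x‖ ∧ ‖x‖ < ε then f x else 0
    letI h : EuclideanSpace ℝ (Fin d) → ℝ :=
      fun x => if ε < ‖x‖ ∧ ‖x‖ < 1 then f x else 0
    letI l : EuclideanSpace ℝ (Fin d) → ℝ :=
      fun x => (1 + δ) * g x + (1 - δ) * h x
    ENNReal.ofReal ((4 + 2 * δ) / (1 + δ) * (1 - ε ^ ((d : ℝ) - d * p / q)) ^ (1 / p)) ≤
      ((smallMorreyNorm d p q f + smallMorreyNorm d p q l) /
          smallMorreyNorm d p q (fun x => f x - l x)) *
        smallMorreyNorm d p q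
          (fun x => f x / (smallMorreyNorm d p q f).toReal -
            l x / (smallMorreyNorm d p q l).toReal) :=
  dunklWilliams_pair_lower_general (zero_lt_one.trans_le hp) hpq hd hε0 hε1 hδ0
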